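/- Let n be a positive integer with rad(n) ∣ q − 1, let k be a positive integer with gcd(n,k) = 1, and for a positive integer w set d^{(w)} := gcd(n, q^w − 1). Then: (i) d^{(km)} = d^{(m)} for every positive integer m; (ii) d^{(2k)} = 2^l · d^{(1)}, where l = min{max{0, ν_2(n) − ν_2(q−1)}, ν_2(q+1)}. -/

import Mathlib

theorem aux_gcd_two (a x : ℕ) (hx : x ≠ 0) :
    Nat.gcd (2 ^ a) x = 2 ^ min a (padicValNat 2 x) := by
  obtain ⟨c, hc, h⟩ := (Nat.dvd_prime_pow Nat.prime_two).1 (Nat.gcd_dvd_left (2 ^ a) x)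
  rw [h]
  congr 1
  apply le_antisymm
  · refine le_min hc ?_
    rw [← padicValNat_dvd_iff_le hx, ← h]
    exact Nat.gcd_dvd_right _ _
  · rw [← Nat.pow_dvd_pow_iff_le_right (le_refl 2), ← h]
    refine Nat.dvd_gcd (pow_dvd_pow _ (min_le_left _ _)) ?_
    rw [padicValNat_dvd_iff_le hx]
    exact min_le_right _ _

theorem aux_one (n k a : ℕ) (ha : 1 ≤ a) (hcop : Nat.Coprime n k)
    (hp : ∀ p, p.Prime → p ∣ n → p ∣ a - 1) :
    Nat.gcd n (a ^ k - 1) = Nat.gcd n (a - 1) := by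
  have h1 : a ^ k - 1 = (∑ i ∈ Finset.range k, a ^ i) * (a - 1) := by
    have h := geom_sum_mul_of_one_le ha k
    exact h.symm
  rw [h1]
  refine Nat.Coprime.gcd_mul_left_cancel_right _ ?_
  refine Nat.Coprime.symm (Nat.coprime_of_dvd ?_)
  intro p pp hpn hps
  have h2 : 1 ≡ a [MOD p] := (Nat.modEq_iff_dvd' ha).2 (hp p pp hpn)
  have h3 : (∑ i ∈ Finset.range k, a ^ i) ≡ k [MOD p] := by
    rw [← ZMod.natCast_eq_natCast_iff] at h2 ⊢
    push_cast at h2 ⊢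
    rw [← h2]
    simp
  have h4 : p ∣ k := (h3.dvd_iff dvd_rfl).1 hps
  exact pp.one_lt.ne' (Nat.eq_one_of_dvd_coprimes hcop hpn h4)

theorem stmt16 (q : ℕ) (hq : IsPrimePow q)
    (n : ℕ) (hn : 0 < n) (hrad : (∏ p ∈ n.primeFactors, p) ∣ q - 1)
    (k : ℕ) (hk : 0 < k) (hcop : Nat.Coprime n k)
    (d : ℕ → ℕ) (hd : ∀ w : ℕ, d w = Nat.gcd n (q ^ w - 1)) :
    (∀ m : ℕ, 0 < m → d (k * m) = d m) ∧
    d (2 * k) =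
      2 ^ (min (max 0 (padicValNat 2 n - padicValNat 2 (q - 1))) (padicValNat 2 (q + 1))) *
        d 1 := by
  have hq1 : 1 < q := hq.one_lt
  have hp : ∀ p, p.Prime → p ∣ n → p ∣ q - 1 := fun p pp hpn =>
    (Finset.dvd_prod_of_mem (fun p => p) (Nat.mem_primeFactors.2 ⟨pp, hpn, hn.ne'⟩)).trans hrad
  have hi : ∀ m : ℕ, 0 < m → d (k * m) = d m := by
    intro m _
    rw [hd, hd, mul_comm, pow_mul]
    refine aux_one n k (q ^ m) (Nat.one_le_pow _ _ (by omega)) hcop ?_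
    intro p pp hpn
    refine (hp p pp hpn).trans ?_
    simpa using Nat.sub_dvd_pow_sub_pow q 1 m
  refine ⟨hi, ?_⟩
  rw [mul_comm 2 k, hi 2 two_pos, hd, hd, pow_one]
  have h2 : q ^ 2 - 1 = (q + 1) * (q - 1) := by simpa using Nat.sq_sub_sq q 1
  rw [h2]
  obtain ⟨a, n', hn', rfl⟩ := Nat.exists_eq_two_pow_mul_odd hn.ne'
  have hc : Nat.Coprime (2 ^ a) n' := Nat.Coprime.pow_left _ (Nat.coprime_two_left.2 hn')
  have hv : padicValNat 2 (2 ^ a * n') = a := by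
    rw [padicValNat.mul (by positivity) (by rintro rfl; simp at hn'), padicValNat.prime_pow,
      padicValNat.eq_zero_of_not_dvd (fun h => Nat.not_even_iff_odd.2 hn' (even_iff_two_dvd.2 h)),
      add_zero]
  have hc2 : Nat.Coprime (q + 1) n' := by
    refine Nat.Coprime.symm (Nat.coprime_of_dvd ?_)
    intro p pp hpn hpq
    have h5 := hp p pp (hpn.mul_left _)
    have h6 : p ∣ 2 := by
      have := Nat.dvd_sub hpq h5
      rwa [show q + 1 - (q - 1) = 2 by omega] at this
    have h7 := (Nat.prime_dvd_prime_iff_eq pp Nat.prime_two).1 h6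
    subst h7
    exact Nat.not_even_iff_odd.2 hn' (even_iff_two_dvd.2 hpn)
  rw [hv, Nat.gcd_comm, hc.gcd_mul, Nat.gcd_comm (2 ^ a * n'), hc.gcd_mul,
    hc2.gcd_mul_left_cancel, ← mul_assoc]
  congr 1
  rw [Nat.gcd_comm, Nat.gcd_comm (q - 1), aux_gcd_two _ _ (mul_ne_zero (by omega) (by omega)),
    aux_gcd_two _ _ (by omega), padicValNat.mul (by omega) (by omega), ← pow_add]
  congr 1
  omega
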